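/- arXiv:1805.11855 — 3 statements merged into one kernel-verified Lean document; each statement's English description precedes it below -/
import Mathlib

section
/- Let n be a positive integer and let real parameters α₁, α₂, α₃, β₁, β₂, β₃ satisfy: (A1) 1+α₁+α₂+α₃ = β₁+β₂+β₃; (A2) 0 < α₂ < β₃ ≤ 2+α₁; (A3) 0 < α₃ < min(β₁, β₂); (A4) (1+α₁)α₂α₃ ≤ β₁β₂β₃. Define the terminating Saalschützian series Θₙ = Σ_{k=0}^{n} (−1)^k C(n,k) (n+α₁)_k (α₂)_k (α₃)_k / ((β₁)_k (β₂)_k (β₃)_k), where C(n,k) is the binomial coefficient. Then Θ₁ ≥ 0 and Θₙ > 0 for every integer n ≥ 2. -/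
/-- Pochhammer symbol `(a)_k = a (a+1) ⋯ (a+k-1)` for a real number `a`. -/
noncomputable def poch (a : ℝ) (k : ℕ) : ℝ := ∏ i ∈ Finset.range k, (a + i)

/-- The terminating Saalschützian series
`Θₙ = ₄F₃[−n, n+α₁, α₂, α₃; β₁, β₂, β₃]` at `1`. -/
noncomputable def Theta (α₁ α₂ α₃ β₁ β₂ β₃ : ℝ) (n : ℕ) : ℝ :=
  ∑ k ∈ Finset.range (n + 1),
    (-1 : ℝ) ^ k * (n.choose k) * poch ((n : ℝ) + α₁) k * poch α₂ k * poch α₃ k /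
      (poch β₁ k * poch β₂ k * poch β₃ k)

open Finset in
lemma poch_zero' (a : ℝ) : poch a 0 = 1 := by simp [poch]

lemma poch_succ' (a : ℝ) (k : ℕ) : poch a (k + 1) = poch a k * (a + k) := by
  simp [poch, Finset.prod_range_succ]

lemma poch_add' (a : ℝ) (k l : ℕ) : poch a (k + l) = poch a k * poch (a + k) l := by
  induction l with
  | zero => simp [poch_zero']
  | succ l ih => rw [← add_assoc, poch_succ', ih, poch_succ']; push_cast; ring

lemma poch_pos' {a : ℝ} (ha : 0 < a) (k : ℕ) : 0 < poch a k :=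
  Finset.prod_pos fun i _ => by positivity

lemma poch_nonneg' {a : ℝ} (ha : 0 ≤ a) (k : ℕ) : 0 ≤ poch a k :=
  Finset.prod_nonneg fun i _ => by positivity

/-- Reflection. -/
lemma poch_refl (x y : ℝ) (k : ℕ) (h : y = 1 - k - x) : poch y k = (-1) ^ k * poch x k := by
  subst h
  unfold poch
  rw [← Finset.prod_range_reflect (fun i : ℕ => x + (i : ℝ)) k]
  have : ((-1 : ℝ)) ^ k = ∏ _i ∈ Finset.range k, (-1 : ℝ) := by simp
  rw [this, ← Finset.prod_mul_distrib]
  apply Finset.prod_congr rfl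
  intro i hi
  have hi' : i + 1 ≤ k := Finset.mem_range.mp hi
  rw [show k - 1 - i = k - (i + 1) by omega, Nat.cast_sub hi']
  push_cast; ring

open Finset Finset.Nat in
/-- Euler / Pfaff-Saalschütz identity in convolution form. -/
lemma euler_conv (A B e : ℝ) (he : 0 < e) (N : ℕ) :
    ∑ x ∈ antidiagonal N, (poch A x.1 * poch B x.1 / (x.1.factorial * poch e x.1)) *
        (poch (e - A - B) x.2 / x.2.factorial) =
      poch (e - A) N * poch (e - B) N / (N.factorial * poch e N) := by
  induction N with
  | zero => simp [poch_zero']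
  | succ N ih =>
    set u : ℕ → ℝ := fun l => poch A l * poch B l / (l.factorial * poch e l) with hu
    set g : ℕ → ℝ := fun j => poch (e - A - B) j / j.factorial with hg
    have hur : ∀ l : ℕ, ((l : ℝ) + 1) * (e + l) * u (l + 1) = (A + l) * (B + l) * u l := by
      intro l
      have h1 := (poch_pos' he l).ne'
      have h2 : e + l ≠ 0 := by positivity
      simp only [hu, poch_succ', Nat.factorial_succ]
      push_cast
      field_simp
    have hgr : ∀ j : ℕ, ((j : ℝ) + 1) * g (j + 1) = (e - A - B + j) * g j := by
      intro j
      simp only [hg, poch_succ', Nat.factorial_succ]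
      push_cast
      field_simp
    change ∑ x ∈ antidiagonal N, u x.1 * g x.2 = _ at ih
    change ∑ x ∈ antidiagonal (N + 1), u x.1 * g x.2 = _
    have key : ((N : ℝ) + 1) * (e + N) * ∑ x ∈ antidiagonal (N + 1), u x.1 * g x.2 =
        (e - A + N) * (e - B + N) * ∑ x ∈ antidiagonal N, u x.1 * g x.2 := by
      have s1 : ((N : ℝ) + 1) * (e + N) * ∑ x ∈ antidiagonal (N + 1), u x.1 * g x.2 =
          ∑ x ∈ antidiagonal (N + 1), (x.1 * (e + x.1 - 1)) * (u x.1 * g x.2) +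
          ∑ x ∈ antidiagonal (N + 1), (x.2 * (e + 2 * x.1 + x.2 - 1)) * (u x.1 * g x.2) := by
        rw [mul_sum, ← sum_add_distrib]
        apply sum_congr rfl
        intro x hx
        have : (x.1 : ℝ) + x.2 = N + 1 := by exact_mod_cast mem_antidiagonal.mp hx
        have : (N : ℝ) = x.1 + x.2 - 1 := by linarith
        rw [this]; ring
      rw [s1, sum_antidiagonal_succ, sum_antidiagonal_succ', mul_sum]
      simp only [Nat.cast_zero, zero_mul, zero_add]
      rw [← sum_add_distrib]
      apply sum_congr rfl
      intro x hx
      have : (x.1 : ℝ) + x.2 = N := by exact_mod_cast mem_antidiagonal.mp hx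
      rw [← this]
      push_cast
      linear_combination g x.2 * hur x.1 + (e + 2 * x.1 + x.2) * u x.1 * hgr x.2
    have h1 := (poch_pos' he N).ne'
    have h2 : e + N ≠ 0 := by positivity
    have h3 : (N : ℝ) + 1 ≠ 0 := by positivity
    rw [ih] at key
    have : ∑ x ∈ antidiagonal (N + 1), u x.1 * g x.2 = (e - A + N) * (e - B + N) *
       (poch (e - A) N * poch (e - B) N / (N.factorial * poch e N)) / (((N : ℝ) + 1) * (e + N)) := by
      rw [eq_div_iff (by positivity)]; linarith
    rw [this]
    simp only [poch_succ', Nat.factorial_succ]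
    push_cast
    field_simp

open Finset Finset.Nat in
lemma saal (A w E F : ℝ) (M : ℕ) (hE : 0 < E) (hF : 0 < F) (h : E + F = 1 - M + A + w) :
    ∑ x ∈ antidiagonal M, (-1) ^ x.1 * poch A x.1 * poch w x.1 /
        (x.1.factorial * x.2.factorial * poch E x.1 * poch F x.1) =
      poch (E - A) M * poch (F - A) M / (M.factorial * poch E M * poch F M) := by
  have hFM := (poch_pos' hF M).ne'
  have hEM := (poch_pos' hE M).ne'
  have e1 := euler_conv A w E hE M
  have e2 : poch (E - w) M = (-1) ^ M * poch (F - A) M := poch_refl _ _ _ (by linarith)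
  have sq : ((-1 : ℝ)) ^ M * (-1) ^ M = 1 := by rw [← mul_pow]; simp
  have : poch (E - A) M * poch (F - A) M / (M.factorial * poch E M * poch F M) =
      ((-1) ^ M / poch F M) * (poch (E - A) M * poch (E - w) M / (M.factorial * poch E M)) := by
    rw [e2]; field_simp; linear_combination (-1 : ℝ) * poch (E - A) M * poch (F - A) M * sq
  rw [this, ← e1, mul_sum]
  apply sum_congr rfl
  intro x hx
  have hx' := mem_antidiagonal.mp hx
  have hxr : (x.1 : ℝ) + x.2 = M := by exact_mod_cast hx'
  have e3 : poch (F + x.1) x.2 = (-1) ^ x.2 * poch (E - A - w) x.2 :=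
    poch_refl _ _ _ (by linarith)
  have e4 : poch F M = poch F x.1 * poch (F + x.1) x.2 := by rw [← hx', poch_add']
  have hF2 : poch (F + x.1) x.2 ≠ 0 := (poch_pos' (by positivity) _).ne'
  have hF1 := (poch_pos' hF x.1).ne'
  have hE1 := (poch_pos' hE x.1).ne'
  have sq2 : ((-1 : ℝ)) ^ x.2 * (-1) ^ x.2 = 1 := by rw [← mul_pow]; simp
  have e5 : poch (E - A - w) x.2 = (-1) ^ x.2 * poch (F + x.1) x.2 := by
    rw [e3, ← mul_assoc, sq2, one_mul]
  rw [e5, e4, ← hx', pow_add]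
  field_simp
  linear_combination (-1 : ℝ) * poch A x.1 * poch w x.1 * sq2

open Finset Finset.Nat in
lemma reassoc (n : ℕ) (F : ℕ → ℕ → ℕ → ℝ) :
    ∑ x ∈ antidiagonal n, ∑ y ∈ antidiagonal x.1, F y.1 y.2 x.2 =
    ∑ x ∈ antidiagonal n, ∑ y ∈ antidiagonal x.2, F x.1 y.1 y.2 := by
  rw [sum_sigma', sum_sigma']
  refine sum_nbij' (fun z => ⟨(z.2.1, z.2.2 + z.1.2), (z.2.2, z.1.2)⟩)
    (fun z => ⟨(z.1.1 + z.2.1, z.2.2), (z.1.1, z.2.1)⟩) ?_ ?_ ?_ ?_ ?_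
  · rintro ⟨⟨a, b⟩, ⟨c, d⟩⟩ h
    simp only [mem_sigma, HasAntidiagonal.mem_antidiagonal] at h ⊢
    exact ⟨by omega, trivial⟩
  · rintro ⟨⟨a, b⟩, ⟨c, d⟩⟩ h
    simp only [mem_sigma, HasAntidiagonal.mem_antidiagonal] at h ⊢
    exact ⟨by omega, trivial⟩
  · rintro ⟨⟨a, b⟩, ⟨c, d⟩⟩ h
    simp only [mem_sigma, HasAntidiagonal.mem_antidiagonal] at h
    obtain ⟨h1, h2⟩ := h
    subst h2; rfl
  · rintro ⟨⟨a, b⟩, ⟨c, d⟩⟩ h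
    simp only [mem_sigma, HasAntidiagonal.mem_antidiagonal] at h
    obtain ⟨h1, h2⟩ := h
    subst h2; rfl
  · rintro ⟨⟨a, b⟩, ⟨c, d⟩⟩ h
    rfl

open Finset Finset.Nat in
/-- Whipple's transformation. -/
lemma whipple (α₁ α₂ α₃ β₁ β₂ β₃ : ℝ)
    (hA1 : 1 + α₁ + α₂ + α₃ = β₁ + β₂ + β₃)
    (h1 : 0 < β₁) (h2 : 0 < β₂) (h3 : 0 < β₃) (n : ℕ) :
    Theta α₁ α₂ α₃ β₁ β₂ β₃ n * (poch β₁ n * poch β₂ n) =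
      n.factorial * ∑ x ∈ antidiagonal n,
        (poch (β₁ - α₃) x.2 * poch (β₂ - α₃) x.2 / x.2.factorial) *
        (poch α₃ x.1 * poch (β₃ - α₂) x.1 / (x.1.factorial * poch β₃ x.1)) *
        poch (x.2 - (β₃ - α₁ - 1)) x.1 := by
  have t1 : Theta α₁ α₂ α₃ β₁ β₂ β₃ n = n.factorial * ∑ x ∈ antidiagonal n,
      ∑ y ∈ antidiagonal x.1, (-1) ^ (y.1 + y.2) * poch α₃ (y.1 + y.2) /
        (x.2.factorial * poch β₁ (y.1 + y.2) * poch β₂ (y.1 + y.2)) *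
        ((poch (β₃ - (n + α₁)) y.1 * poch (β₃ - α₂) y.1 / (y.1.factorial * poch β₃ y.1)) *
          (poch (n + α₁ + α₂ - β₃) y.2 / y.2.factorial)) := by
    unfold Theta
    rw [← Nat.succ_eq_add_one, ← sum_antidiagonal_eq_sum_range_succ_mk (fun x : ℕ × ℕ =>
      (-1 : ℝ) ^ x.1 * (n.choose x.1) * poch ((n : ℝ) + α₁) x.1 * poch α₂ x.1 * poch α₃ x.1 /
      (poch β₁ x.1 * poch β₂ x.1 * poch β₃ x.1)), mul_sum]
    apply sum_congr rfl
    intro x hx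
    have hx' := mem_antidiagonal.mp hx
    have e := euler_conv (β₃ - (n + α₁)) (β₃ - α₂) β₃ h3 x.1
    rw [show β₃ - (β₃ - (n + α₁)) - (β₃ - α₂) = n + α₁ + α₂ - β₃ by ring, sub_sub_cancel,
      sub_sub_cancel] at e
    have : ∀ y ∈ antidiagonal x.1, (-1) ^ (y.1 + y.2) * poch α₃ (y.1 + y.2) /
        (x.2.factorial * poch β₁ (y.1 + y.2) * poch β₂ (y.1 + y.2)) *
        ((poch (β₃ - (n + α₁)) y.1 * poch (β₃ - α₂) y.1 / (y.1.factorial * poch β₃ y.1)) *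
          (poch (n + α₁ + α₂ - β₃) y.2 / y.2.factorial)) = 
        (-1) ^ (x.1) * poch α₃ (x.1) /
        (x.2.factorial * poch β₁ (x.1) * poch β₂ (x.1)) *
        ((poch (β₃ - (n + α₁)) y.1 * poch (β₃ - α₂) y.1 / (y.1.factorial * poch β₃ y.1)) *
          (poch (n + α₁ + α₂ - β₃) y.2 / y.2.factorial)) := by
      intro y hy
      rw [mem_antidiagonal.mp hy]
    rw [sum_congr rfl this, ← mul_sum, e]
    have c : (n.choose x.1 : ℝ) * x.1.factorial * x.2.factorial = n.factorial := by
      have hc := Nat.choose_mul_factorial_mul_factorial (show x.1 ≤ n by omega)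
      rw [show n - x.1 = x.2 by omega] at hc
      exact_mod_cast hc
    rw [← c]
    have := (poch_pos' h1 x.1).ne'
    have := (poch_pos' h2 x.1).ne'
    have := (poch_pos' h3 x.1).ne'
    field_simp
  rw [t1, reassoc n (fun i l m => (-1) ^ (i + l) * poch α₃ (i + l) /
        (m.factorial * poch β₁ (i + l) * poch β₂ (i + l)) *
        ((poch (β₃ - (n + α₁)) i * poch (β₃ - α₂) i / (i.factorial * poch β₃ i)) *
          (poch (n + α₁ + α₂ - β₃) l / l.factorial))), mul_assoc, sum_mul]
  congr 1
  apply sum_congr rfl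
  intro x hx
  have hx' := mem_antidiagonal.mp hx
  have hxr : (x.1 : ℝ) + x.2 = n := by exact_mod_cast hx'
  have s := saal (α₃ + x.1) (n + α₁ + α₂ - β₃) (β₁ + x.1) (β₂ + x.1) x.2 (by positivity)
    (by positivity) (by linarith)
  have p1 := (poch_pos' h1 x.1).ne'
  have p2 := (poch_pos' h2 x.1).ne'
  have p3 := (poch_pos' h3 x.1).ne'
  have q1 : poch (β₁ + x.1) x.2 ≠ 0 := (poch_pos' (by positivity) _).ne'
  have q2 : poch (β₂ + x.1) x.2 ≠ 0 := (poch_pos' (by positivity) _).ne'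
  have r : poch (β₃ - (n + α₁)) x.1 = (-1) ^ x.1 * poch (x.2 - (β₃ - α₁ - 1)) x.1 :=
    poch_refl _ _ _ (by linarith)
  have sq : ((-1 : ℝ)) ^ x.1 * (-1) ^ x.1 = 1 := by rw [← mul_pow]; simp
  rw [add_sub_add_right_eq_sub, add_sub_add_right_eq_sub] at s
  have : ∀ y ∈ antidiagonal x.2, (-1) ^ (x.1 + y.1) * poch α₃ (x.1 + y.1) /
        (y.2.factorial * poch β₁ (x.1 + y.1) * poch β₂ (x.1 + y.1)) *
        ((poch (β₃ - (n + α₁)) x.1 * poch (β₃ - α₂) x.1 / (x.1.factorial * poch β₃ x.1)) *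
          (poch (n + α₁ + α₂ - β₃) y.1 / y.1.factorial)) =
      (poch (x.2 - (β₃ - α₁ - 1)) x.1 * poch α₃ x.1 * poch (β₃ - α₂) x.1 /
        (x.1.factorial * poch β₃ x.1 * poch β₁ x.1 * poch β₂ x.1)) *
      ((-1) ^ y.1 * poch (α₃ + x.1) y.1 * poch (n + α₁ + α₂ - β₃) y.1 /
        (y.1.factorial * y.2.factorial * poch (β₁ + x.1) y.1 * poch (β₂ + x.1) y.1)) := by
    intro y _
    have q1 : poch (β₁ + x.1) y.1 ≠ 0 := (poch_pos' (by positivity) _).ne'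
    have q2 : poch (β₂ + x.1) y.1 ≠ 0 := (poch_pos' (by positivity) _).ne'
    rw [r, poch_add', poch_add', poch_add', pow_add]
    field_simp
    rw [pow_two, sq]; try ring
  rw [sum_congr rfl this, ← mul_sum, s, ← hx', poch_add', poch_add']
  field_simp

open Finset Finset.Nat in
lemma conv_neg (p q a r b δ : ℝ) (hp : 0 < p) (hq : 0 < q) (ha : 0 < a) (hr : 0 < r)
    (hd0 : 0 < δ) (hd1 : δ < 1) (hb : a + r < b) (W : ℕ → ℝ)
    (hW : ∀ n, W n = ∑ x ∈ antidiagonal n,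
      (poch p x.2 * poch q x.2 / (x.2.factorial * poch (-δ) x.2)) *
      (poch a x.1 * poch r x.1 / (x.1.factorial * poch b x.1)))
    (n : ℕ) (hn : W n ≤ 0) : W (n + 1) < 0 := by
  have hb0 : 0 < b := by linarith
  have hpd : ∀ m, poch (-δ) (m + 1) < 0 := by
    intro m
    rw [add_comm, poch_add']
    have : 0 < poch (-δ + (1 : ℕ)) m := poch_pos' (by push_cast; linarith) m
    have h1 : poch (-δ) 1 = -δ := by simp [poch]
    rw [h1]
    exact mul_neg_of_neg_of_pos (by linarith) this
  have hpd0 : ∀ m, poch (-δ) m ≠ 0 := by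
    intro m
    cases m with
    | zero => simp [poch_zero']
    | succ m => exact (hpd m).ne
  have hmd : ∀ m : ℕ, (-δ + m) ≠ 0 := by
    intro m
    cases m with
    | zero => simp; exact hd0.ne'
    | succ m => push_cast; have : (0 : ℝ) ≤ m := by positivity
                intro h; linarith
  set u : ℕ → ℝ := fun m => poch p m * poch q m / (m.factorial * poch (-δ) m) with hu
  set g : ℕ → ℝ := fun j => poch a j * poch r j / (j.factorial * poch b j) with hg
  set h : ℝ → ℝ := fun x => (a + x) * (r + x) / (b + x) with hh
  have hW' : ∀ n, W n = ∑ x ∈ antidiagonal n, u x.2 * g x.1 := hW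
  have hur : ∀ m : ℕ, ((m : ℝ) + 1) * u (m + 1) = (p + m) * (q + m) / (-δ + m) * u m := by
    intro m
    have h1 := hpd0 m
    have h2 := hmd m
    simp only [hu, poch_succ', Nat.factorial_succ]
    push_cast
    field_simp
  have hgr : ∀ j : ℕ, ((j : ℝ) + 1) * g (j + 1) = h j * g j := by
    intro j
    have h1 := (poch_pos' hb0 j).ne'
    have h2 : b + j ≠ 0 := by positivity
    simp only [hg, hh, poch_succ', Nat.factorial_succ]
    push_cast
    field_simp
  have hgp : ∀ j, 0 < g j := fun j => by
    have := poch_pos' ha j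
    have := poch_pos' hr j
    have := poch_pos' hb0 j
    simp only [hg]; positivity
  have hun : ∀ m, u (m + 1) < 0 := fun m => by
    have h1 := poch_pos' hp (m + 1)
    have h2 := poch_pos' hq (m + 1)
    simp only [hu]
    exact div_neg_of_pos_of_neg (by positivity) (mul_neg_of_pos_of_neg (by positivity) (hpd m))
  have hu0 : u 0 = 1 := by simp [hu, poch_zero']
  have key : ((n : ℝ) + 1) * W (n + 1) = ∑ x ∈ antidiagonal n,
      ((p + x.2) * (q + x.2) / (-δ + x.2) + h x.1) * (u x.2 * g x.1) := by
    have s1 : ((n : ℝ) + 1) * W (n + 1) =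
        ∑ x ∈ antidiagonal (n + 1), x.1 * (u x.2 * g x.1) +
        ∑ x ∈ antidiagonal (n + 1), x.2 * (u x.2 * g x.1) := by
      rw [hW', mul_sum, ← sum_add_distrib]
      apply sum_congr rfl
      intro x hx
      have : (x.1 : ℝ) + x.2 = n + 1 := by exact_mod_cast mem_antidiagonal.mp hx
      rw [← this]; ring
    rw [s1, sum_antidiagonal_succ, sum_antidiagonal_succ']
    simp only [Nat.cast_zero, zero_mul, zero_add]
    rw [← sum_add_distrib]
    apply sum_congr rfl
    intro x _
    push_cast
    linear_combination u x.2 * hgr x.1 + g x.1 * hur x.2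
  have hlt : ((n : ℝ) + 1) * W (n + 1) < h n * W n := by
    rw [key, hW', mul_sum]
    apply sum_lt_sum_of_nonempty ⟨(0, n), by simp⟩
    rintro ⟨j, m⟩ hx
    have hx' : j + m = n := mem_antidiagonal.mp hx
    have hxr : (j : ℝ) + m = n := by exact_mod_cast hx'
    have hgj := hgp j
    simp only
    cases m with
    | zero =>
      simp only [add_zero] at hx'
      subst hx'
      rw [hu0]
      have : (p + (0 : ℕ)) * (q + (0 : ℕ)) / (-δ + (0 : ℕ)) < 0 := by
        simp only [Nat.cast_zero, add_zero]
        exact div_neg_of_pos_of_neg (by positivity) (by linarith)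
      nlinarith
    | succ m =>
      have hum := hun m
      have hneg : u (m + 1) * g j < 0 := mul_neg_of_neg_of_pos hum hgj
      apply mul_lt_mul_of_neg_right _ hneg
      set M : ℝ := ((m + 1 : ℕ) : ℝ) with hM
      have hM1 : 1 ≤ M := by rw [hM]; push_cast; have : (0 : ℝ) ≤ m := by positivity
                             linarith
      have hj : (0 : ℝ) ≤ j := by positivity
      have i1 : M < (p + M) * (q + M) / (-δ + M) := by
        rw [lt_div_iff₀ (by linarith)]
        have : 0 < p * q + p * M + q * M + M * δ := by positivity
        nlinarith
      have i2 : h n ≤ h j + M := by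
        rw [← hxr]
        simp only [hh]
        rw [div_add' _ _ _ (by positivity), div_le_div_iff₀ (by positivity) (by positivity)]
        have : 0 ≤ M * ((b - a) * (b - r)) :=
          mul_nonneg (by linarith) (mul_nonneg (by linarith) (by linarith))
        nlinarith
      linarith
  have hhn : 0 ≤ h n := by simp only [hh]; positivity
  have : h n * W n ≤ 0 := mul_nonpos_of_nonneg_of_nonpos hhn hn
  by_contra hc
  push Not at hc
  have : 0 ≤ ((n : ℝ) + 1) * W (n + 1) := by positivity
  linarith

open Finset Finset.Nat in
theorem stmt0 (α₁ α₂ α₃ β₁ β₂ β₃ : ℝ)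
    (hA1 : 1 + α₁ + α₂ + α₃ = β₁ + β₂ + β₃)
    (hA2a : 0 < α₂) (hA2b : α₂ < β₃) (hA2c : β₃ ≤ 2 + α₁)
    (hA3a : 0 < α₃) (hA3b : α₃ < min β₁ β₂)
    (hA4 : (1 + α₁) * α₂ * α₃ ≤ β₁ * β₂ * β₃) :
    0 ≤ Theta α₁ α₂ α₃ β₁ β₂ β₃ 1 ∧
      ∀ n : ℕ, 2 ≤ n → 0 < Theta α₁ α₂ α₃ β₁ β₂ β₃ n := by
  obtain ⟨hb1, hb2⟩ := lt_min_iff.mp hA3b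
  have h1 : 0 < β₁ := by linarith
  have h2 : 0 < β₂ := by linarith
  have h3 : 0 < β₃ := by linarith
  have hp : 0 < β₁ - α₃ := by linarith
  have hq : 0 < β₂ - α₃ := by linarith
  have hr : 0 < β₃ - α₂ := by linarith
  have T1 : 0 ≤ Theta α₁ α₂ α₃ β₁ β₂ β₃ 1 := by
    have : Theta α₁ α₂ α₃ β₁ β₂ β₃ 1 = 1 - (1 + α₁) * α₂ * α₃ / (β₁ * β₂ * β₃) := by
      simp [Theta, Finset.sum_range_succ, poch]; ring
    rw [this, sub_nonneg, div_le_one (by positivity)]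
    exact hA4
  refine ⟨T1, ?_⟩
  have wh := whipple α₁ α₂ α₃ β₁ β₂ β₃ hA1 h1 h2 h3
  by_cases hd : 0 < β₃ - α₁ - 1 ∧ β₃ - α₁ - 1 < 1
  · obtain ⟨hd0, hd1⟩ := hd
    set δ := β₃ - α₁ - 1 with hδ
    set W : ℕ → ℝ := fun n => ∑ x ∈ antidiagonal n,
      (poch (β₁ - α₃) x.2 * poch (β₂ - α₃) x.2 / (x.2.factorial * poch (-δ) x.2)) *
      (poch α₃ x.1 * poch (β₃ - α₂) x.1 / (x.1.factorial * poch β₃ x.1)) with hW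
    have hpd : ∀ m, poch (-δ) (m + 1) < 0 := by
      intro m
      rw [add_comm, poch_add']
      have : 0 < poch (-δ + (1 : ℕ)) m := poch_pos' (by push_cast; linarith) m
      have h1 : poch (-δ) 1 = -δ := by simp [poch]
      rw [h1]
      exact mul_neg_of_neg_of_pos (by linarith) this
    have hpd0 : ∀ m, poch (-δ) m ≠ 0 := by
      intro m
      cases m with
      | zero => simp [poch_zero']
      | succ m => exact (hpd m).ne
    have wh2 : ∀ n, Theta α₁ α₂ α₃ β₁ β₂ β₃ n * (poch β₁ n * poch β₂ n) =
        n.factorial * poch (-δ) n * W n := by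
      intro n
      rw [wh, mul_assoc]
      congr 1
      simp only [hW]
      rw [mul_sum]
      apply sum_congr rfl
      intro x hx
      have hx' := mem_antidiagonal.mp hx
      have := hpd0 x.2
      have := (poch_pos' h3 x.1).ne'
      rw [← hx', add_comm x.1, poch_add', show -δ + (x.2 : ℝ) = x.2 - δ by ring]
      field_simp
    have W1 : W 1 ≤ 0 := by
      by_contra hc
      push Not at hc
      have e := wh2 1
      have a1 : 0 ≤ Theta α₁ α₂ α₃ β₁ β₂ β₃ 1 * (poch β₁ 1 * poch β₂ 1) :=
        mul_nonneg T1 (mul_pos (poch_pos' h1 1) (poch_pos' h2 1)).le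
      have a2 : ((1 : ℕ).factorial : ℝ) * poch (-δ) 1 * W 1 < 0 :=
        mul_neg_of_neg_of_pos (mul_neg_of_pos_of_neg (by positivity) (hpd 0)) hc
      linarith
    have step := conv_neg (β₁ - α₃) (β₂ - α₃) α₃ (β₃ - α₂) β₃ δ hp hq hA3a hr hd0 hd1
      (by linarith) W (fun n => rfl)
    have all : ∀ n, W (n + 2) < 0 := by
      intro n
      induction n with
      | zero => exact step 1 W1
      | succ n ih => exact step (n + 2) ih.le
    intro n hn
    obtain ⟨m, rfl⟩ := Nat.exists_eq_add_of_le' hn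
    have e := wh2 (m + 2)
    have a2 : 0 < ((m + 2).factorial : ℝ) * poch (-δ) (m + 2) * W (m + 2) :=
      mul_pos_of_neg_of_neg (mul_neg_of_pos_of_neg (by positivity) (hpd (m + 1))) (all m)
    rw [← e] at a2
    exact pos_of_mul_pos_left a2 (mul_pos (poch_pos' h1 _) (poch_pos' h2 _)).le
  · intro n hn
    have a2 : 0 < Theta α₁ α₂ α₃ β₁ β₂ β₃ n * (poch β₁ n * poch β₂ n) := by
      rw [wh]
      apply mul_pos (by positivity)
      have hpp := fun k => poch_pos' hp k
      have hqq := fun k => poch_pos' hq k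
      have hrr := fun k => poch_pos' hr k
      have haa := fun k => poch_pos' hA3a k
      have hbb := fun k => poch_pos' h3 k
      apply sum_pos'
      · rintro ⟨k, m⟩ hx
        have hx' : k + m = n := mem_antidiagonal.mp hx
        have hc : 0 ≤ poch ((m : ℝ) - (β₃ - α₁ - 1)) k := by
          by_cases h0 : 0 < β₃ - α₁ - 1
          · have hδ : β₃ - α₁ - 1 = 1 := by
              apply le_antisymm (by linarith)
              by_contra hcon
              exact hd ⟨h0, not_le.mp hcon⟩
            rw [hδ]
            cases m with
            | zero =>
              apply le_of_eq
              symm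
              apply Finset.prod_eq_zero (i := 1) (by simp; omega)
              simp
            | succ m => exact poch_nonneg' (by push_cast; simp) k
          · exact poch_nonneg' (by have : (0 : ℝ) ≤ m := by positivity
                                   linarith) k
        have := hpp m
        have := hqq m
        have := hrr k
        have := haa k
        have := hbb k
        simp only
        positivity
      · refine ⟨(0, n), by simp, ?_⟩
        have := hpp n
        have := hqq n
        simp only [poch_zero']
        positivity
    exact pos_of_mul_pos_left a2 (mul_pos (poch_pos' h1 _) (poch_pos' h2 _)).le
end

section
/- Let real numbers α₁, α₂, α₃, β₁, β₂, β₃ satisfy the Saalschützian condition 1+α₁+α₂+α₃ = β₁+β₂+β₃, with β₁ ≠ 0 and β₂ ≠ 0, and set Ω₁ = (1+α₁−β₃)(β₃−α₂) + (1+α₁)α₂(β₁−α₃)(β₂−α₃)/(β₁β₂). Then Ω₁ = (β₁+β₂−α₃)[β₁β₂β₃ − (1+α₁)α₂α₃]/(β₁β₂). In particular, if additionally 0 < α₃ < min(β₁, β₂) and (1+α₁)α₂α₃ ≤ β₁β₂β₃, then Ω₁ ≥ 0. -/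
theorem stmt1 (α₁ α₂ α₃ β₁ β₂ β₃ : ℝ)
    (hS : 1 + α₁ + α₂ + α₃ = β₁ + β₂ + β₃)
    (hb1 : β₁ ≠ 0) (hb2 : β₂ ≠ 0) :
    (1 + α₁ - β₃) * (β₃ - α₂) + (1 + α₁) * α₂ * (β₁ - α₃) * (β₂ - α₃) / (β₁ * β₂) =
      (β₁ + β₂ - α₃) * (β₁ * β₂ * β₃ - (1 + α₁) * α₂ * α₃) / (β₁ * β₂) ∧
    (0 < α₃ → α₃ < min β₁ β₂ → (1 + α₁) * α₂ * α₃ ≤ β₁ * β₂ * β₃ →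
      0 ≤ (1 + α₁ - β₃) * (β₃ - α₂) + (1 + α₁) * α₂ * (β₁ - α₃) * (β₂ - α₃) / (β₁ * β₂)) := by
  have key : (1 + α₁ - β₃) * (β₃ - α₂)
      + (1 + α₁) * α₂ * (β₁ - α₃) * (β₂ - α₃) / (β₁ * β₂) =
      (β₁ + β₂ - α₃) * (β₁ * β₂ * β₃ - (1 + α₁) * α₂ * α₃) / (β₁ * β₂) := by
    have h : α₁ = β₁ + β₂ + β₃ - 1 - α₂ - α₃ := by linarith
    subst h
    field_simp
    ring
  refine ⟨key, fun h0 hm hle => ?_⟩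
  rw [key]
  obtain ⟨h1, h2⟩ := lt_min_iff.mp hm
  have p1 : 0 < β₁ := h0.trans h1
  have p2 : 0 < β₂ := h0.trans h2
  exact div_nonneg (mul_nonneg (by linarith) (by linarith)) (mul_pos p1 p2).le
end

section
/- For every real α > −1/2 and every real x, the square of the function 𝕁_α(x) = ₀F₁(α+1; −x²/4) = Σ_{k=0}^{∞} (−x²/4)^k / (k! (α+1)_k) satisfies 𝕁_α(x)² = ₁F₂(α + 1/2; α+1, 2α+1; −x²) = Σ_{k=0}^{∞} (α+1/2)_k / (k! (α+1)_k (2α+1)_k) · (−x²)^k. -/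
/-- The generalized hypergeometric series `₀F₁(b; z)`. -/
noncomputable def zeroF1 (b z : ℝ) : ℝ :=
  ∑' k : ℕ, z ^ k / ((k.factorial : ℝ) * poch b k)

/-- The generalized hypergeometric series `₁F₂(a; b, c; z)`. -/
noncomputable def oneF2 (a b c z : ℝ) : ℝ :=
  ∑' k : ℕ, poch a k / ((k.factorial : ℝ) * poch b k * poch c k) * z ^ k


theorem fall_poch (b : ℝ) (i j : ℕ) :
    (∏ k ∈ Finset.range j, (b + ((i + j : ℕ) : ℝ) - 1 - k)) * poch b i = poch b (i + j) := by
  induction j with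
  | zero => simp
  | succ j ih =>
    rw [Finset.prod_range_succ', ← add_assoc]
    have hs : poch b (i + j + 1) = poch b (i + j) * (b + ((i + j : ℕ) : ℝ)) :=
      Finset.prod_range_succ _ _
    rw [hs, ← ih]
    have : ∏ k ∈ Finset.range j, (b + ((i + j + 1 : ℕ) : ℝ) - 1 - ((k + 1 : ℕ) : ℝ))
        = ∏ k ∈ Finset.range j, (b + ((i + j : ℕ) : ℝ) - 1 - k) := by
      apply Finset.prod_congr rfl
      intro k _
      push_cast
      ring
    rw [this]
    push_cast
    ring

theorem poch_double (b : ℝ) (n : ℕ) :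
    poch (2 * b - 1) (n + n) = 4 ^ n * poch (b - 1 / 2) n * poch b n := by
  induction n with
  | zero => simp [poch]
  | succ n ih =>
    have e : n + 1 + (n + 1) = n + n + 1 + 1 := by ring
    rw [e]
    unfold poch at *
    rw [Finset.prod_range_succ, Finset.prod_range_succ, ih, Finset.prod_range_succ,
      Finset.prod_range_succ]
    push_cast
    ring

theorem choose_fall (r : ℝ) (n : ℕ) :
    Ring.choose r n = (∏ k ∈ Finset.range n, (r - k)) / (n.factorial : ℝ) := by
  have h := Ring.descPochhammer_eq_factorial_smul_choose r n
  have h2 : (descPochhammer ℤ n).smeval r = ∏ k ∈ Finset.range n, (r - k) := by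
    rw [← descPochhammer_eval_eq_prod_range, ← descPochhammer_map (Int.castRingHom ℝ),
      Polynomial.eval_map, ← Polynomial.eval₂_smulOneHom_eq_smeval]
    congr 1
    exact RingHom.ext_int _ _
  have hf : (n.factorial : ℝ) ≠ 0 := by positivity
  rw [← h2, h, nsmul_eq_mul]
  field_simp

theorem poch_pos {b : ℝ} (hb : 0 < b) (n : ℕ) : 0 < poch b n :=
  Finset.prod_pos fun i _ => by positivity

theorem coeff_id (b : ℝ) (hb : 1 / 2 < b) (n : ℕ) :
    ∑ p ∈ Finset.HasAntidiagonal.antidiagonal n,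
      (1 / ((p.1.factorial : ℝ) * poch b p.1)) * (1 / ((p.2.factorial : ℝ) * poch b p.2))
      = 4 ^ n * (poch (b - 1 / 2) n / ((n.factorial : ℝ) * poch b n * poch (2 * b - 1) n)) := by
  have h := Ring.add_choose_eq n (Commute.all (b + (n : ℝ) - 1) (b + (n : ℝ) - 1))
  have hb0 := poch_pos (b := b) (by linarith)
  have hc0 := poch_pos (b := 2 * b - 1) (by linarith)
  have h1 : ∑ p ∈ Finset.HasAntidiagonal.antidiagonal n,
      (1 / ((p.1.factorial : ℝ) * poch b p.1)) * (1 / ((p.2.factorial : ℝ) * poch b p.2))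
      = (∑ p ∈ Finset.HasAntidiagonal.antidiagonal n, Ring.choose (b + (n : ℝ) - 1) p.1 *
          Ring.choose (b + (n : ℝ) - 1) p.2) / (poch b n * poch b n) := by
    rw [Finset.sum_div]
    apply Finset.sum_congr rfl
    rintro ⟨i, j⟩ hp
    have hij : i + j = n := by simpa using hp
    have hji : j + i = n := by omega
    have f1 := fall_poch b i j
    have f2 := fall_poch b j i
    rw [hij] at f1
    rw [hji] at f2
    rw [choose_fall, choose_fall]
    dsimp only
    have hi := (hb0 i).ne'
    have hj := (hb0 j).ne'
    have hn := (hb0 n).ne'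
    have hfi : (i.factorial : ℝ) ≠ 0 := by positivity
    have hfj : (j.factorial : ℝ) ≠ 0 := by positivity
    rw [← eq_div_iff hi] at f1
    rw [← eq_div_iff hj] at f2
    rw [f1, f2]
    field_simp
  rw [h1, ← h, choose_fall]
  have f3 := fall_poch (2 * b - 1) n n
  rw [poch_double, ← eq_div_iff (hc0 n).ne'] at f3
  have e : ∏ k ∈ Finset.range n, (b + (n : ℝ) - 1 + (b + (n : ℝ) - 1) - k)
      = ∏ k ∈ Finset.range n, (2 * b - 1 + ((n + n : ℕ) : ℝ) - 1 - k) := by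
    apply Finset.prod_congr rfl
    intro k _
    push_cast
    ring
  rw [e, f3]
  have hn := (hb0 n).ne'
  have hc := (hc0 n).ne'
  have hfi : (n.factorial : ℝ) ≠ 0 := by positivity
  field_simp

theorem summ (b : ℝ) (hb : 1 / 2 < b) (z : ℝ) :
    Summable fun k : ℕ => ‖z ^ k / ((k.factorial : ℝ) * poch b k)‖ := by
  refine Summable.of_nonneg_of_le (fun _ => norm_nonneg _) (fun k => ?_)
    (Real.summable_pow_div_factorial (2 * |z|))
  have h : (1 / 2 : ℝ) ^ k ≤ poch b k := by
    unfold poch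
    have hc : (1 / 2 : ℝ) ^ k = ∏ _i ∈ Finset.range k, (1 / 2 : ℝ) := by simp
    rw [hc]
    refine Finset.prod_le_prod (fun _ _ => by norm_num) fun i _ => ?_
    have : (0 : ℝ) ≤ i := by positivity
    linarith
  have hp := poch_pos (b := b) (by linarith) k
  have hf : (0 : ℝ) < k.factorial := by positivity
  rw [norm_div, norm_pow, Real.norm_eq_abs, Real.norm_of_nonneg (by positivity),
    div_le_div_iff₀ (by positivity) hf, mul_pow]
  have h2 : 1 ≤ 2 ^ k * poch b k := by
    calc (1 : ℝ) = 2 ^ k * (1 / 2) ^ k := by rw [← mul_pow]; norm_num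
      _ ≤ _ := by gcongr
  have h3 : 0 ≤ |z| ^ k * k.factorial := by positivity
  nlinarith [mul_le_mul_of_nonneg_left h2 h3]

theorem stmt6 (α : ℝ) (hα : -1 / 2 < α) (x : ℝ) :
    (zeroF1 (α + 1) (-x ^ 2 / 4)) ^ 2 =
      oneF2 (α + 1 / 2) (α + 1) (2 * α + 1) (-x ^ 2) := by
  have hb : 1 / 2 < α + 1 := by linarith
  have hs := summ (α + 1) hb (-x ^ 2 / 4)
  rw [sq, zeroF1, tsum_mul_tsum_eq_tsum_sum_antidiagonal_of_summable_norm hs hs, oneF2]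
  congr 1
  funext n
  have h := coeff_id (α + 1) hb n
  rw [show α + 1 - 1 / 2 = α + 1 / 2 by ring, show 2 * (α + 1) - 1 = 2 * α + 1 by ring] at h
  have e : -x ^ 2 = 4 * (-x ^ 2 / 4) := by ring
  generalize -x ^ 2 / 4 = z at *
  rw [e, mul_pow, ← mul_assoc, mul_comm _ ((4 : ℝ) ^ n), ← h, Finset.sum_mul]
  apply Finset.sum_congr rfl
  rintro ⟨i, j⟩ hp
  have hij : i + j = n := by simpa using hp
  rw [← hij, pow_add]
  dsimp only
  ring
end
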